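/- For every t > 0 and every ρ > 0, one has μ^{ℓ,r}_t([ρ, ∞)) ≤ (E[R^γ]/(γ(γ−1)))·t·ρ^{−γ}. -/

import Mathlib

open MeasureTheory Filter Set
open scoped ENNReal NNReal Topology

noncomputable section

/-- `ℓ_t(s,u)`: the length of the interval `[s,s+u] ∩ [0,t]`. -/
def ellK (t s u : ℝ) : ℝ := max 0 (min (s + u) t - max s 0)

/-- The intensity measure `u^{-γ-1} du` on `(0,∞)`. -/
def muU (γ : ℝ) : Measure ℝ :=
  (volume.restrict (Set.Ioi 0)).withDensity fun u => ENNReal.ofReal (u ^ (-γ - 1))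

/-- The measure `μ^ℓ_t` on `(0,∞)`:
`μ^ℓ_t(A) = ∫_ℝ ∫_0^∞ 1{ℓ_t(s,u) ∈ A} u^{-γ-1} du ds`. -/
def muEll (γ t : ℝ) : Measure ℝ :=
  (Measure.map (fun p : ℝ × ℝ => ellK t p.1 p.2)
    ((volume : Measure ℝ).prod (muU γ))).restrict (Set.Ioi 0)

/-- The measure `μ^{ℓ,r}_t` on `(0,∞)`:
`μ^{ℓ,r}_t(A) = ∫_{(0,∞)} ∫_{(0,∞)} 1{rℓ ∈ A} μ^ℓ_t(dℓ) F_R(dr)`. -/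
def muEllR (γ t : ℝ) (FR : Measure ℝ) : Measure ℝ :=
  (Measure.map (fun p : ℝ × ℝ => p.1 * p.2) (FR.prod (muEll γ t))).restrict (Set.Ioi 0)

/-- The measure `ν` on `[0,1]`: density `s^{-(γ+1)} + ((2-γ)/γ)·s^{-γ}` on `(0,1)` with
respect to Lebesgue measure, together with an atom of mass `1/(γ(γ-1))` at the point `1`. -/
def nuM (γ : ℝ) : Measure ℝ :=
  (volume.restrict (Set.Ioo 0 1)).withDensity
      (fun s => ENNReal.ofReal (s ^ (-(γ + 1)) + (2 - γ) / γ * s ^ (-γ)))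
    + (Real.toNNReal (1 / (γ * (γ - 1)))) • Measure.dirac 1

instance nuM.sigmaFinite (γ : ℝ) : SigmaFinite (nuM γ) := by
  unfold nuM; infer_instance

end

theorem measurable_ellK (t : ℝ) : Measurable (fun p : ℝ × ℝ => ellK t p.1 p.2) := by
  unfold ellK; fun_prop

theorem ellK_ge {t s u x : ℝ} (hx : 0 < x) (h : x ≤ ellK t s u) :
    x ≤ t ∧ x ≤ u ∧ s ∈ Set.Icc (x - u) (t - x) := by
  unfold ellK at h
  have h' : x ≤ min (s + u) t - max s 0 := by
    rcases le_max_iff.1 h with h | h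
    · linarith
    · exact h
  have := min_le_left (s + u) t
  have := min_le_right (s + u) t
  have := le_max_left s 0
  have := le_max_right s 0
  refine ⟨?_, ?_, ?_, ?_⟩ <;> linarith

theorem lintegral_aux (γ : ℝ) (hγ1 : 1 < γ) (hγ2 : γ < 2) (t x : ℝ) (hx : 0 < x) (hxt : x ≤ t) :
    ∫⁻ u in Set.Ioi x, ENNReal.ofReal (u ^ (-γ - 1)) * ENNReal.ofReal (t - 2 * x + u)
      ≤ ENNReal.ofReal (t / (γ * (γ - 1)) * x ^ (-γ)) := by
  have h1 := integrableOn_Ioi_rpow_of_lt (a := -γ - 1) (by linarith) hx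
  have h2 := integrableOn_Ioi_rpow_of_lt (a := -γ) (by linarith) hx
  have i1 := integral_Ioi_rpow_of_lt (a := -γ - 1) (by linarith) hx
  have i2 := integral_Ioi_rpow_of_lt (a := -γ) (by linarith) hx
  have e : ∫⁻ u in Set.Ioi x, ENNReal.ofReal (u ^ (-γ - 1)) * ENNReal.ofReal (t - 2 * x + u)
      = ∫⁻ u in Set.Ioi x, ENNReal.ofReal ((t - 2 * x) * u ^ (-γ - 1) + u ^ (-γ)) := by
    refine setLIntegral_congr_fun measurableSet_Ioi ?_
    intro u hu
    have hu0 : 0 < u := hx.trans hu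
    have : u ^ (-γ) = u ^ (-γ - 1) * u := by
      rw [← Real.rpow_add_one hu0.ne']; congr 1; ring
    simp only
    rw [← ENNReal.ofReal_mul (by positivity), this]
    congr 1; ring
  have h3 : Integrable (fun u : ℝ => (t - 2 * x) * u ^ (-γ - 1) + u ^ (-γ))
      (volume.restrict (Set.Ioi x)) := Integrable.add (Integrable.const_mul h1 _) h2
  rw [e, ← ofReal_integral_eq_lintegral_ofReal h3]
  · apply ENNReal.ofReal_le_ofReal
    rw [integral_add (h1.const_mul _) h2, integral_const_mul, i1, i2]
    have e1 : -γ - 1 + 1 = -γ := by ring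
    have e2 : x ^ (-γ + 1) = x ^ (-γ) * x := Real.rpow_add_one hx.ne' _
    rw [e1, e2]
    have hp : 0 < x ^ (-γ) := by positivity
    have g0 : γ ≠ 0 := by linarith
    have g1 : γ - 1 ≠ 0 := by linarith
    have g2 : -γ + 1 ≠ 0 := by linarith
    have key : t / (γ * (γ - 1)) * x ^ (-γ)
        - ((t - 2 * x) * (-x ^ (-γ) / -γ) + -(x ^ (-γ) * x) / (-γ + 1))
        = (2 - γ) * (t - x) * x ^ (-γ) / (γ * (γ - 1)) := by
      have : -γ + 1 = -(γ - 1) := by ring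
      rw [this]
      field_simp
      ring
    have : 0 ≤ (2 - γ) * (t - x) * x ^ (-γ) / (γ * (γ - 1)) := by
      have a1 : 0 ≤ 2 - γ := by linarith
      have a2 : 0 ≤ t - x := by linarith
      have a3 : 0 ≤ γ := by linarith
      have a4 : 0 ≤ γ - 1 := by linarith
      positivity
    linarith
  · refine (ae_restrict_mem measurableSet_Ioi).mono fun u hu => ?_
    have hu' : x < u := hu
    have hu0 : 0 < u := hx.trans hu
    have : u ^ (-γ) = u ^ (-γ - 1) * u := by
      rw [← Real.rpow_add_one hu0.ne']; congr 1; ring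
    simp only [Pi.zero_apply, this]
    have : (t - 2 * x) * u ^ (-γ - 1) + u ^ (-γ - 1) * u = (t - 2 * x + u) * u ^ (-γ - 1) := by
      ring
    rw [this]
    exact mul_nonneg (by linarith) (by positivity)

instance muU.sFinite (γ : ℝ) : SFinite (muU γ) := by
  unfold muU; infer_instance

instance muEll.sFinite (γ t : ℝ) : SFinite (muEll γ t) := by
  unfold muEll; infer_instance

theorem muEll_Ici (γ : ℝ) (hγ1 : 1 < γ) (hγ2 : γ < 2) (t x : ℝ) (ht : 0 < t) (hx : 0 < x) :
    muEll γ t (Set.Ici x) ≤ ENNReal.ofReal (t / (γ * (γ - 1)) * x ^ (-γ)) := by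
  unfold muEll
  refine (Measure.restrict_apply_le _ _).trans ?_
  rw [Measure.map_apply (measurable_ellK t) measurableSet_Ici]
  rcases lt_or_ge t x with htx | hxt
  · have : (fun p : ℝ × ℝ => ellK t p.1 p.2) ⁻¹' Set.Ici x = ∅ := by
      ext p
      simp only [Set.mem_preimage, Set.mem_Ici, Set.mem_empty_iff_false, iff_false]
      intro h
      exact absurd (ellK_ge hx h).1 (not_le.2 htx)
    rw [this]; simp
  rw [Measure.prod_apply_symm (measurable_ellK t measurableSet_Ici)]
  refine le_trans ?_ (lintegral_aux γ hγ1 hγ2 t x hx hxt)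
  calc _ ≤ ∫⁻ u, (Set.Ici x).indicator (fun u => ENNReal.ofReal (t - 2 * x + u)) u ∂(muU γ) := by
        refine lintegral_mono fun u => ?_
        by_cases hu : x ≤ u
        · rw [Set.indicator_of_mem (by exact hu)]
          have : ENNReal.ofReal (t - 2 * x + u) = volume (Set.Icc (x - u) (t - x)) := by
            rw [Real.volume_Icc]; congr 1; ring
          rw [this]
          exact measure_mono fun s hs => (ellK_ge hx hs).2.2
        · rw [Set.indicator_of_notMem (by exact hu)]
          have : (fun s : ℝ => (s, u)) ⁻¹' ((fun p : ℝ × ℝ => ellK t p.1 p.2) ⁻¹' Set.Ici x)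
              = ∅ := by
            ext s
            simp only [Set.mem_preimage, Set.mem_Ici, Set.mem_empty_iff_false, iff_false]
            intro h
            exact hu (ellK_ge hx h).2.1
          rw [this]; simp
    _ = ∫⁻ u in Set.Ioi 0, ENNReal.ofReal (u ^ (-γ - 1)) *
          (Set.Ici x).indicator (fun u => ENNReal.ofReal (t - 2 * x + u)) u := by
        unfold muU
        rw [lintegral_withDensity_eq_lintegral_mul]
        · rfl
        · fun_prop
        · exact Measurable.indicator (by fun_prop) measurableSet_Ici
    _ ≤ ∫⁻ u, (Set.Ici x).indicator (fun u => ENNReal.ofReal (u ^ (-γ - 1)) *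
          ENNReal.ofReal (t - 2 * x + u)) u := by
        refine (setLIntegral_le_lintegral _ _).trans (le_of_eq ?_)
        congr 1; ext u
        by_cases hu : u ∈ Set.Ici x <;> simp [hu]
    _ = _ := by
        rw [lintegral_indicator measurableSet_Ici]
        exact setLIntegral_congr Ioi_ae_eq_Ici.symm

/-- For every `t > 0` and `ρ > 0`: `μ^{ℓ,r}_t([ρ,∞)) ≤ (E[R^γ]/(γ(γ-1)))·t·ρ^{-γ}`. -/
theorem stmt_9 (γ : ℝ) (hγ1 : 1 < γ) (hγ2 : γ < 2)
    (FR : Measure ℝ) [IsProbabilityMeasure FR] (hFRpos : FR (Set.Iic 0) = 0)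
    (hmom : Integrable (fun r => r ^ γ) FR)
    (t : ℝ) (ht : 0 < t) (ρ : ℝ) (hρ : 0 < ρ) :
    muEllR γ t FR (Set.Ici ρ)
      ≤ ENNReal.ofReal ((∫ r, r ^ γ ∂FR) / (γ * (γ - 1)) * t * ρ ^ (-γ)) := by
  have hpos : ∀ᵐ r ∂FR, 0 < r := by
    rw [ae_iff]
    convert hFRpos using 2
    ext r; simp
  unfold muEllR
  refine (Measure.restrict_apply_le _ _).trans ?_
  have hm : Measurable (fun p : ℝ × ℝ => p.1 * p.2) := by fun_prop
  rw [Measure.map_apply hm measurableSet_Ici, Measure.prod_apply (hm measurableSet_Ici)]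
  have hC : (∫ r, r ^ γ ∂FR) / (γ * (γ - 1)) * t * ρ ^ (-γ)
      = ∫ r, (t / (γ * (γ - 1)) * ρ ^ (-γ)) * r ^ γ ∂FR := by
    rw [integral_const_mul]; ring
  have hc : 0 ≤ t / (γ * (γ - 1)) * ρ ^ (-γ) := by
    have a3 : 0 ≤ γ := by linarith
    have a4 : 0 ≤ γ - 1 := by linarith
    positivity
  rw [hC, ofReal_integral_eq_lintegral_ofReal (hmom.const_mul _)]
  · refine lintegral_mono_ae (hpos.mono fun r hr => ?_)
    have hs : Prod.mk r ⁻¹' ((fun p : ℝ × ℝ => p.1 * p.2) ⁻¹' Set.Ici ρ) = Set.Ici (ρ / r) := by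
      ext l
      simp only [Set.mem_preimage, Set.mem_Ici]
      rw [div_le_iff₀ hr, mul_comm]
    rw [hs]
    refine (muEll_Ici γ hγ1 hγ2 t (ρ / r) ht (by positivity)).trans (le_of_eq ?_)
    congr 1
    rw [Real.div_rpow hρ.le hr.le, Real.rpow_neg hr.le γ, div_inv_eq_mul]
    ring
  · exact hpos.mono fun r hr => mul_nonneg hc (by positivity)
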